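/- arXiv:2302.07098 — 2 statements merged into one kernel-verified Lean document; each statement's English description precedes it below -/
import Mathlib

section
/- Let β ∈ ℝ be such that β/π is irrational, let α ∈ ℝ, and let k be a nonnegative integer. Then lim_{N→∞} (1/N^{k+1}) Σ_{n=1}^{N} n^k cos²(α n + β n²) = 1/(2(k+1)) and lim_{N→∞} (1/N^{k+1}) Σ_{n=1}^{N} n^k sin²(α n + β n²) = 1/(2(k+1)). -/
open Filter Finset

/-!
By `cos² x = (1 + cos (2 x)) / 2` and `sin² x = (1 - cos (2 x)) / 2`, it is enough that the
partial sums of `cos (α n + β n²)` are `o(N)` whenever `β / π` is irrational. This follows from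
van der Corput's difference theorem: if the correlations `∑_{n ≤ N} ⟪u n, u (n + h)⟫` of a bounded
sequence `u` are `o(N)` for each `h ≠ 0`, then so is `∑_{n ≤ N} u n`. For the chirp
`u n = exp (i (α n + β n²))` these correlations are sums `∑_{n ≤ N} cos (2 β h n + c)`, which are
bounded because `sin (β h) ≠ 0`. Abel's inequality transfers the `o(N)` estimate to the weights
`n ^ k`, so that only the main term `∑_{n ≤ N} n ^ k ~ N ^ (k + 1) / (k + 1)` survives the
normalization.
-/

section NormedGroup

open Asymptotics

variable {E : Type*} [SeminormedAddCommGroup E]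

theorem isLittleO_natCast_of_norm_le {f : ℕ → E} {C : ℝ} (hf : ∀ n, ‖f n‖ ≤ C) :
    f =o[atTop] fun N : ℕ => (N : ℝ) := by
  have hone : (fun _ : ℕ => (1 : ℝ)) =o[atTop] fun N : ℕ => (N : ℝ) :=
    (isLittleO_one_left_iff ℝ).2 (tendsto_norm_atTop_atTop.comp tendsto_natCast_atTop_atTop)
  exact (IsBigO.of_bound C (.of_forall fun n => by simpa using hf n)).trans_isLittleO hone

theorem isLittleO_sum_Icc_comp_add_sub_sum_Icc {u : ℕ → E} {C : ℝ} (hu : ∀ n, ‖u n‖ ≤ C)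
    (h : ℕ) :
    (fun N : ℕ => ∑ n ∈ Icc 1 N, u (n + h) - ∑ n ∈ Icc 1 N, u n)
      =o[atTop] fun N : ℕ => (N : ℝ) := by
  induction h with
  | zero => exact isLittleO_natCast_of_norm_le (C := 0) fun N => by simp
  | succ h ih =>
    have telescope (N : ℕ) :
        ∑ n ∈ Icc 1 N, u (n + (h + 1)) - ∑ n ∈ Icc 1 N, u (n + h)
          = u (N + 1 + h) - u (1 + h) := by
      rw [← sum_sub_distrib, ← Ico_add_one_right_eq_Icc,
        ← sum_Ico_sub (fun n => u (n + h)) (Nat.le_add_left 1 N)]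
      simp only [add_assoc, add_comm h 1]
    have boundary : (fun N : ℕ => u (N + 1 + h) - u (1 + h)) =o[atTop] fun N : ℕ => (N : ℝ) :=
      isLittleO_natCast_of_norm_le fun N => norm_sub_le_of_le (hu _) (hu _)
    refine (boundary.add ih).congr_left fun N => ?_
    rw [← telescope, sub_add_sub_cancel]

theorem exists_norm_le_of_isLittleO_natCast {S : ℕ → E}
    (hS : S =o[atTop] fun N : ℕ => (N : ℝ)) {ε : ℝ} (hε : 0 < ε) :
    ∃ C, ∀ n : ℕ, ‖S n‖ ≤ ε * n + C := by
  have hbdd : IsBoundedUnder (· ≤ ·) atTop fun n : ℕ => ‖S n‖ - ε * n := by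
    refine isBoundedUnder_of_eventually_le (a := 0) ?_
    filter_upwards [hS.def hε] with n hn
    simpa using hn
  obtain ⟨C, hC⟩ := hbdd.bddAbove_range
  exact ⟨C, fun n => by linarith [hC (Set.mem_range_self n)]⟩

theorem norm_sum_sq_le_card_mul_sum_norm_sq {ι : Type*} (s : Finset ι) (v : ι → E) :
    ‖∑ i ∈ s, v i‖ ^ 2 ≤ #s * ∑ i ∈ s, ‖v i‖ ^ 2 :=
  (pow_le_pow_left₀ (norm_nonneg _) (norm_sum_le s v) 2).trans sq_sum_le_card_mul_sum_sq

end NormedGroup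

section VanDerCorput

open Asymptotics
open scoped RealInnerProductSpace

variable {E : Type*} [SeminormedAddCommGroup E] [InnerProductSpace ℝ E]

theorem norm_sum_range_sq_real (x : ℕ → E) (H : ℕ) :
    ‖∑ i ∈ range H, x i‖ ^ 2
      = ∑ i ∈ range H, ‖x i‖ ^ 2 + 2 * ∑ j ∈ range H, ∑ i ∈ range j, ⟪x i, x j⟫ := by
  induction H with
  | zero => simp
  | succ H ih =>
    rw [sum_range_succ, norm_add_sq_real, ih, sum_inner, sum_range_succ, sum_range_succ]
    ring

variable {u : ℕ → E} {C : ℝ}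

theorem isLittleO_sum_Icc_inner_comp_add (hu : ∀ n, ‖u n‖ ≤ C)
    (hcorr : ∀ h ≠ 0, (fun N : ℕ => ∑ n ∈ Icc 1 N, ⟪u n, u (n + h)⟫)
      =o[atTop] fun N : ℕ => (N : ℝ)) {i j : ℕ} (hij : i < j) :
    (fun N : ℕ => ∑ n ∈ Icc 1 N, ⟪u (n + i), u (n + j)⟫) =o[atTop] fun N : ℕ => (N : ℝ) := by
  have hbound (n : ℕ) : ‖⟪u n, u (n + (j - i))⟫‖ ≤ C * C :=
    (norm_inner_le_norm _ _).trans (mul_le_mul (hu _) (hu _) (norm_nonneg _)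
      ((norm_nonneg _).trans (hu 0)))
  refine ((isLittleO_sum_Icc_comp_add_sub_sum_Icc hbound i).add
    (hcorr (j - i) (Nat.sub_ne_zero_of_lt hij))).congr_left fun N => ?_
  simp only [sub_add_cancel, add_assoc, Nat.add_sub_cancel' hij.le]

theorem eventually_sum_Icc_norm_sum_range_sq_le (hu : ∀ n, ‖u n‖ ≤ C)
    (hcorr : ∀ h ≠ 0, (fun N : ℕ => ∑ n ∈ Icc 1 N, ⟪u n, u (n + h)⟫)
      =o[atTop] fun N : ℕ => (N : ℝ)) (H : ℕ) {ε : ℝ} (hε : 0 < ε) :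
    ∀ᶠ N : ℕ in atTop,
      ∑ n ∈ Icc 1 N, ‖∑ h ∈ range H, u (n + h)‖ ^ 2 ≤ (H * C ^ 2 + ε) * N := by
  have hcross : (fun N : ℕ => ∑ j ∈ range H, ∑ i ∈ range j,
      ∑ n ∈ Icc 1 N, ⟪u (n + i), u (n + j)⟫) =o[atTop] fun N : ℕ => (N : ℝ) :=
    .fun_sum fun j _ => .fun_sum fun i hi =>
      isLittleO_sum_Icc_inner_comp_add hu hcorr (mem_range.1 hi)
  filter_upwards [hcross.def (half_pos hε)] with N hN
  have hdiag : ∑ n ∈ Icc 1 N, ∑ h ∈ range H, ‖u (n + h)‖ ^ 2 ≤ H * C ^ 2 * N := by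
    calc ∑ n ∈ Icc 1 N, ∑ h ∈ range H, ‖u (n + h)‖ ^ 2
        ≤ ∑ n ∈ Icc 1 N, ∑ h ∈ range H, C ^ 2 := by gcongr; exact hu _
      _ = H * C ^ 2 * N := by
          simp only [sum_const, card_range, Nat.card_Icc, add_tsub_cancel_right, nsmul_eq_mul]
          ring
  have hoff : ∑ n ∈ Icc 1 N, ∑ j ∈ range H, ∑ i ∈ range j, ⟪u (n + i), u (n + j)⟫
      ≤ ε / 2 * N := by
    rw [sum_comm]
    simp_rw [sum_comm (s := Icc 1 N)]
    simpa using (le_abs_self _).trans hN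
  simp_rw [norm_sum_range_sq_real, sum_add_distrib, ← mul_sum]
  linarith

/-- Van der Corput's difference theorem. Up to `o(N)`, multiplying the sum by `H` amounts to
replacing `u n` by `∑ h ∈ range H, u (n + h)`, whose mean square is of order `H` and not `H ^ 2`
because the cross terms are correlations. -/
theorem isLittleO_sum_Icc_of_isLittleO_sum_Icc_inner (hu : ∀ n, ‖u n‖ ≤ C)
    (hcorr : ∀ h ≠ 0, (fun N : ℕ => ∑ n ∈ Icc 1 N, ⟪u n, u (n + h)⟫)
      =o[atTop] fun N : ℕ => (N : ℝ)) :
    (fun N : ℕ => ∑ n ∈ Icc 1 N, u n) =o[atTop] fun N : ℕ => (N : ℝ) := by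
  refine isLittleO_iff.2 fun c hc => ?_
  obtain ⟨H, hH⟩ := exists_nat_gt ((C ^ 2 + 1) / (c / 2) ^ 2)
  have hH0 : (0 : ℝ) < H := lt_of_le_of_lt (by positivity) hH
  have hHc : H * C ^ 2 + H ≤ (c / 2 * H) ^ 2 := by
    have := (div_lt_iff₀ (by positivity)).1 hH
    nlinarith
  have hshift : (fun N : ℕ => ∑ h ∈ range H, (∑ n ∈ Icc 1 N, u (n + h) - ∑ n ∈ Icc 1 N, u n))
      =o[atTop] fun N : ℕ => (N : ℝ) :=
    .fun_sum fun h _ => isLittleO_sum_Icc_comp_add_sub_sum_Icc hu h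
  filter_upwards [hshift.def (c := c / 2 * H) (by positivity),
    eventually_sum_Icc_norm_sum_range_sq_le hu hcorr H hH0] with N hN hsq
  set S := ∑ n ∈ Icc 1 N, u n
  set V := ∑ n ∈ Icc 1 N, ∑ h ∈ range H, u (n + h) with hV
  have hVS : ‖V - (H : ℝ) • S‖ ≤ c / 2 * H * N := by
    rw [hV, sum_comm]
    simpa [← Nat.cast_smul_eq_nsmul ℝ] using hN
  have hVle : ‖V‖ ≤ c / 2 * H * N := by
    refine le_of_sq_le_sq ?_ (by positivity)
    calc ‖V‖ ^ 2 ≤ N * ∑ n ∈ Icc 1 N, ‖∑ h ∈ range H, u (n + h)‖ ^ 2 := by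
          simpa using norm_sum_sq_le_card_mul_sum_norm_sq (Icc 1 N) _
      _ ≤ N * ((c / 2 * H) ^ 2 * N) := by gcongr; exact hsq.trans (by gcongr)
      _ = (c / 2 * H * N) ^ 2 := by ring
  have hHS : H * ‖S‖ ≤ H * (c * N) := by
    calc H * ‖S‖ = ‖(H : ℝ) • S‖ := by simp [norm_smul]
      _ ≤ ‖V‖ + ‖V - (H : ℝ) • S‖ := norm_le_norm_add_norm_sub _ _
      _ ≤ H * (c * N) := by linarith
  simpa using le_of_mul_le_mul_left hHS hH0

end VanDerCorput

section Chirp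

open Asymptotics
open scoped RealInnerProductSpace

theorem isLittleO_sum_Icc_cos {a : ℝ} (ha : Real.sin (a / 2) ≠ 0) (b : ℝ) :
    (fun N : ℕ => ∑ n ∈ Icc 1 N, Real.cos (a * n + b)) =o[atTop] fun N : ℕ => (N : ℝ) := by
  refine isLittleO_natCast_of_norm_le (C := |Real.sin (a / 2)|⁻¹) fun N => ?_
  have hsum : Real.sin (a / 2) * ∑ n ∈ Icc 1 N, Real.cos (a * n + b)
      = Real.sin (N * a / 2) * Real.cos ((N - 1) * a / 2 + (a + b)) := by
    rw [← Real.sin_mul_sum_cos, ← Ico_add_one_right_eq_Icc, sum_Ico_eq_sum_range]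
    congr! 3 with n
    push_cast
    ring
  rw [Real.norm_eq_abs, ← one_div, le_div_iff₀' (abs_pos.2 ha), ← abs_mul, hsum, abs_mul]
  exact mul_le_one₀ (Real.abs_sin_le_one _) (abs_nonneg _) (Real.abs_cos_le_one _)

theorem sin_mul_natCast_ne_zero_of_irrational {β : ℝ} (hβ : Irrational (β / Real.pi)) {h : ℕ}
    (hh : h ≠ 0) : Real.sin (β * h) ≠ 0 := by
  refine Real.sin_ne_zero_iff.2 fun m hm => (hβ.mul_natCast hh).ne_int m ?_
  rw [div_mul_eq_mul_div, ← hm, mul_div_cancel_right₀ _ Real.pi_ne_zero]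

theorem real_inner_cexp_mul_I (x y : ℝ) :
    ⟪Complex.exp (x * Complex.I), Complex.exp (y * Complex.I)⟫ = Real.cos (y - x) := by
  rw [Complex.inner, ← Complex.exp_conj, ← Complex.exp_add, ← Complex.exp_ofReal_mul_I_re]
  simp [add_mul, sub_eq_add_neg]

theorem isLittleO_sum_Icc_cexp_chirp {β : ℝ} (hβ : Irrational (β / Real.pi)) (α : ℝ) :
    (fun N : ℕ => ∑ n ∈ Icc 1 N, Complex.exp ((α * n + β * n ^ 2 : ℝ) * Complex.I))
      =o[atTop] fun N : ℕ => (N : ℝ) := by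
  refine isLittleO_sum_Icc_of_isLittleO_sum_Icc_inner
    (fun n => (Complex.norm_exp_ofReal_mul_I _).le) fun h hh => ?_
  have hsin : Real.sin (2 * β * h / 2) ≠ 0 := by
    rw [mul_assoc, mul_div_cancel_left₀ _ two_ne_zero]
    exact sin_mul_natCast_ne_zero_of_irrational hβ hh
  refine (isLittleO_sum_Icc_cos hsin (α * h + β * h ^ 2)).congr_left fun N => ?_
  refine sum_congr rfl fun n _ => ?_
  rw [real_inner_cexp_mul_I]
  congr 1
  push_cast
  ring

theorem isLittleO_sum_Icc_cos_chirp {β : ℝ} (hβ : Irrational (β / Real.pi)) (α : ℝ) :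
    (fun N : ℕ => ∑ n ∈ Icc 1 N, Real.cos (α * n + β * n ^ 2))
      =o[atTop] fun N : ℕ => (N : ℝ) := by
  refine (isBigO_of_le _ fun N => ?_).trans_isLittleO (isLittleO_sum_Icc_cexp_chirp hβ α)
  simpa only [Complex.re_sum, Complex.exp_ofReal_mul_I_re, Real.norm_eq_abs] using
    Complex.abs_re_le_norm (∑ n ∈ Icc 1 N, Complex.exp ((α * n + β * n ^ 2 : ℝ) * Complex.I))

theorem isLittleO_sum_Icc_cos_sq_chirp_sub_half {β : ℝ} (hβ : Irrational (β / Real.pi)) (α : ℝ) :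
    (fun N : ℕ => ∑ n ∈ Icc 1 N, (Real.cos (α * n + β * n ^ 2) ^ 2 - 1 / 2))
      =o[atTop] fun N : ℕ => (N : ℝ) := by
  have hβ₂ : Irrational (2 * β / Real.pi) := by
    simpa only [mul_div_assoc, Nat.cast_ofNat] using hβ.natCast_mul two_ne_zero
  refine ((isLittleO_sum_Icc_cos_chirp hβ₂ (2 * α)).const_mul_left (1 / 2)).congr_left fun N => ?_
  rw [mul_sum]
  refine sum_congr rfl fun n _ => ?_
  rw [Real.cos_sq, mul_add, ← mul_assoc, ← mul_assoc]
  ring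

theorem isLittleO_sum_Icc_sin_sq_chirp_sub_half {β : ℝ} (hβ : Irrational (β / Real.pi)) (α : ℝ) :
    (fun N : ℕ => ∑ n ∈ Icc 1 N, (Real.sin (α * n + β * n ^ 2) ^ 2 - 1 / 2))
      =o[atTop] fun N : ℕ => (N : ℝ) := by
  refine (isLittleO_sum_Icc_cos_sq_chirp_sub_half hβ α).neg_left.congr_left fun N => ?_
  rw [← sum_neg_distrib]
  refine sum_congr rfl fun n _ => ?_
  rw [Real.sin_sq]
  ring

end Chirp

section WeightedSums

open Asymptotics
open scoped Topology

theorem sum_Icc_smul_eq_smul_sub_sum_range {R M : Type*} [Ring R] [AddCommGroup M] [Module R M]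
    (w : ℕ → R) (a : ℕ → M) (N : ℕ) :
    ∑ n ∈ Icc 1 N, w n • a n = w N • ∑ n ∈ Icc 1 N, a n
      - ∑ n ∈ range N, (w (n + 1) - w n) • ∑ i ∈ Icc 1 n, a i := by
  induction N with
  | zero => simp
  | succ N ih =>
    rw [sum_Icc_succ_top (Nat.le_add_left 1 N), ih, sum_Icc_succ_top (Nat.le_add_left 1 N),
      sum_range_succ]
    simp only [smul_add, sub_smul]
    abel

variable {E : Type*} [SeminormedAddCommGroup E] [NormedSpace ℝ E] {a : ℕ → E} {w : ℕ → ℝ}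

theorem norm_sum_Icc_smul_le_of_monotone (hw : Monotone w) (hw0 : 0 ≤ w 0) {B : ℝ} {N : ℕ}
    (hB : ∀ n ≤ N, ‖∑ i ∈ Icc 1 n, a i‖ ≤ B) :
    ‖∑ n ∈ Icc 1 N, w n • a n‖ ≤ 2 * w N * B := by
  have hB0 : 0 ≤ B := (norm_nonneg _).trans (hB 0 N.zero_le)
  have hwN : 0 ≤ w N := hw0.trans (hw N.zero_le)
  have hhead : ‖w N • ∑ n ∈ Icc 1 N, a n‖ ≤ w N * B := by
    rw [norm_smul, Real.norm_of_nonneg hwN]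
    gcongr
    exact hB N le_rfl
  have hincr : ‖∑ n ∈ range N, (w (n + 1) - w n) • ∑ i ∈ Icc 1 n, a i‖ ≤ (w N - w 0) * B := by
    rw [← sum_range_sub, sum_mul]
    refine norm_sum_le_of_le _ fun n hn => ?_
    have hdiff : 0 ≤ w (n + 1) - w n := sub_nonneg.2 (hw n.le_succ)
    rw [norm_smul, Real.norm_of_nonneg hdiff]
    gcongr
    exact hB n (mem_range.1 hn).le
  rw [sum_Icc_smul_eq_smul_sub_sum_range]
  calc _ ≤ w N * B + (w N - w 0) * B := norm_sub_le_of_le hhead hincr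
    _ ≤ 2 * w N * B := by linarith [mul_nonneg hw0 hB0]

theorem isLittleO_sum_Icc_smul_of_monotone (hw : Monotone w) (hw0 : 0 ≤ w 0)
    (ha : (fun N : ℕ => ∑ n ∈ Icc 1 N, a n) =o[atTop] fun N : ℕ => (N : ℝ)) :
    (fun N : ℕ => ∑ n ∈ Icc 1 N, w n • a n) =o[atTop] fun N : ℕ => N * w N := by
  refine isLittleO_iff.2 fun c hc => ?_
  obtain ⟨C, hC⟩ := exists_norm_le_of_isLittleO_natCast ha (ε := c / 4) (by positivity)
  have hlarge : ∀ᶠ N : ℕ in atTop, C ≤ c / 4 * N :=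
    (tendsto_natCast_atTop_atTop.const_mul_atTop (by positivity)).eventually_ge_atTop C
  filter_upwards [hlarge] with N hN
  have hwN : 0 ≤ w N := hw0.trans (hw N.zero_le)
  have hpartial : ∀ n ≤ N, ‖∑ i ∈ Icc 1 n, a i‖ ≤ c / 2 * N := fun n hn => by
    calc ‖∑ i ∈ Icc 1 n, a i‖ ≤ c / 4 * n + C := hC n
      _ ≤ c / 4 * N + c / 4 * N := by gcongr
      _ = c / 2 * N := by ring
  calc ‖∑ n ∈ Icc 1 N, w n • a n‖ ≤ 2 * w N * (c / 2 * N) :=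
        norm_sum_Icc_smul_le_of_monotone hw hw0 hpartial
    _ = c * ‖N * w N‖ := by rw [Real.norm_of_nonneg (by positivity)]; ring

theorem tendsto_inv_pow_mul_sum_Icc_pow (k : ℕ) :
    Tendsto (fun N : ℕ => ((N : ℝ) ^ (k + 1))⁻¹ * ∑ n ∈ Icc 1 N, (n : ℝ) ^ k)
      atTop (𝓝 ((k : ℝ) + 1)⁻¹) := by
  let c (i : ℕ) : ℝ := bernoulli' i * (k + 1).choose i / (k + 1)
  have hlim : Tendsto (fun x : ℝ => ∑ i ∈ range (k + 1), c i * x ^ i) (𝓝 0)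
      (𝓝 ((k : ℝ) + 1)⁻¹) :=
    Continuous.tendsto' (by fun_prop) _ _ (by simp [sum_range_succ', c])
  refine (hlim.comp tendsto_inv_atTop_nhds_zero_nat).congr' ?_
  filter_upwards [eventually_ne_atTop 0] with N hN
  have faulhaber : ∑ n ∈ Icc 1 N, (n : ℝ) ^ k
      = ∑ i ∈ range (k + 1), c i * (N : ℝ) ^ (k + 1 - i) := by
    have h := congrArg (Rat.cast : ℚ → ℝ) (sum_Ico_pow N k)
    push_cast [Ico_add_one_right_eq_Icc] at h
    rw [h]
    exact sum_congr rfl fun i _ => by ring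
  rw [faulhaber, Function.comp_apply, mul_sum]
  refine sum_congr rfl fun i hi => ?_
  rw [pow_sub₀ _ (Nat.cast_ne_zero.2 hN) (mem_range.1 hi).le, inv_pow]
  field_simp

theorem tendsto_inv_pow_smul_sum_Icc_pow_smul {L : E}
    (ha : (fun N : ℕ => ∑ n ∈ Icc 1 N, (a n - L)) =o[atTop] fun N : ℕ => (N : ℝ)) (k : ℕ) :
    Tendsto (fun N : ℕ => ((N : ℝ) ^ (k + 1))⁻¹ • ∑ n ∈ Icc 1 N, (n : ℝ) ^ k • a n)
      atTop (𝓝 (((k : ℝ) + 1)⁻¹ • L)) := by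
  have hmono : Monotone fun n : ℕ => (n : ℝ) ^ k := fun m n hmn => by dsimp only; gcongr
  have herror := (isLittleO_sum_Icc_smul_of_monotone hmono (by positivity) ha)
    |>.tendsto_inv_smul_nhds_zero
  have hmain := (tendsto_inv_pow_mul_sum_Icc_pow k).smul_const L
  refine (zero_add (((k : ℝ) + 1)⁻¹ • L) ▸ herror.add hmain).congr fun N => ?_
  rw [← pow_succ', mul_smul, sum_smul, ← smul_add, ← sum_add_distrib]
  simp only [← smul_add, sub_add_cancel]

end WeightedSums

/-- Weighted chirp squared trigonometric sum limits: if `β / π` is irrational, then the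
normalized weighted sums of `cos² (α n + β n²)` and `sin² (α n + β n²)` tend to `1/(2(k+1))`. -/
theorem statement_5 (β : ℝ) (hβ : Irrational (β / Real.pi)) (α : ℝ) (k : ℕ) :
    Tendsto (fun N : ℕ =>
        (1 / (N : ℝ) ^ (k + 1)) *
          ∑ n ∈ Finset.Icc 1 N, (n : ℝ) ^ k * Real.cos (α * n + β * n ^ 2) ^ 2)
      atTop (nhds (1 / (2 * ((k : ℝ) + 1)))) ∧
    Tendsto (fun N : ℕ =>
        (1 / (N : ℝ) ^ (k + 1)) *
          ∑ n ∈ Finset.Icc 1 N, (n : ℝ) ^ k * Real.sin (α * n + β * n ^ 2) ^ 2)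
      atTop (nhds (1 / (2 * ((k : ℝ) + 1)))) := by
  have hcos := tendsto_inv_pow_smul_sum_Icc_pow_smul
    (isLittleO_sum_Icc_cos_sq_chirp_sub_half hβ α) k
  have hsin := tendsto_inv_pow_smul_sum_Icc_pow_smul
    (isLittleO_sum_Icc_sin_sq_chirp_sub_half hβ α) k
  have hlimit : ((k : ℝ) + 1)⁻¹ • (1 / 2 : ℝ) = 1 / (2 * ((k : ℝ) + 1)) := by
    rw [smul_eq_mul, one_div, one_div, mul_inv_rev]
  rw [hlimit] at hcos hsin
  simp only [smul_eq_mul, ← one_div] at hcos hsin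
  exact ⟨hcos, hsin⟩
end

section
/- Let β ∈ ℝ be such that β/π is irrational, let α₁, α₂ ∈ ℝ with α₁ − α₂ not an integer multiple of 2π, and let k be a nonnegative integer. Then lim_{N→∞} (1/N^{k+1}) Σ_{n=1}^{N} n^k cos(α₁ n + β n²) cos(α₂ n + β n²) = 0. -/
open Filter Finset

/-!
The product of the two cosines is half the sum of the cosine of the difference of the phases, which
is linear in `n`, and the cosine of their sum, which is quadratic with leading coefficient `2β`.
Linear phases `x * n + c` with `x ∉ 2πℤ` average to zero because their sums telescope.

Quadratic phases reduce to linear ones by van der Corput's method. If all correlations of a bounded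
sequence `u` at positive lags average to zero, then on average the squared norm of the window sum
`∑ h < H, u (n + h)` is `O(H)`, since only the diagonal terms survive. The mean of `u` is thus
`O(1 / √H)` for every `H`. For the quadratic phase, `θ (n + h) - θ n` is linear in `n` with slope
`4βh`, and `4βh ∉ 2πℤ` since `β / π` is irrational.

Summation by parts then shows that the weights `n ^ k` preserve vanishing averages.
-/

open Asymptotics
open scoped Topology RealInnerProductSpace

/-- A sequence has zero mean if its Cesàro averages tend to `0`. This is encoded as
`∑ n < N, u n = o(N)`, which avoids dividing by `N = 0`. -/
def HasZeroMean {E : Type*} [NormedAddCommGroup E] (u : ℕ → E) : Prop :=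
  (fun N : ℕ ↦ ∑ n ∈ range N, u n) =o[atTop] (fun N : ℕ ↦ (N : ℝ))

namespace HasZeroMean

section NormedAddCommGroup

variable {E : Type*} [NormedAddCommGroup E] {u v : ℕ → E}

lemma of_norm_sum_le {C : ℝ} (h : ∀ N, ‖∑ n ∈ range N, u n‖ ≤ C) : HasZeroMean u :=
  (IsBigO.of_bound C <| .of_forall fun N ↦ by simpa using h N).trans_isLittleO <|
    isLittleO_const_id_atTop (1 : ℝ) |>.comp_tendsto tendsto_natCast_atTop_atTop

lemma add (hu : HasZeroMean u) (hv : HasZeroMean v) : HasZeroMean fun n ↦ u n + v n := by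
  simpa only [HasZeroMean, sum_add_distrib] using IsLittleO.add hu hv

lemma finsetSum {ι : Type*} {s : Finset ι} {f : ι → ℕ → E} (h : ∀ i ∈ s, HasZeroMean (f i)) :
    HasZeroMean fun n ↦ ∑ i ∈ s, f i n := by
  simpa only [HasZeroMean, sum_comm (s := s)] using IsLittleO.fun_sum h

lemma map [NormedSpace ℝ E] {F : Type*} [NormedAddCommGroup F] [NormedSpace ℝ F]
    (hu : HasZeroMean u) (L : E →L[ℝ] F) : HasZeroMean fun n ↦ L (u n) := by
  simpa only [HasZeroMean, map_sum] using (L.isBigO_comp _ _).trans_isLittleO hu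

lemma shift_sub {C : ℝ} (hu : ∀ n, ‖u n‖ ≤ C) (h : ℕ) : HasZeroMean fun n ↦ u (n + h) - u n := by
  refine of_norm_sum_le (C := h * (2 * C)) fun N ↦ ?_
  have hsum : ∑ n ∈ range N, (u (n + h) - u n) = ∑ i ∈ range h, (u (N + i) - u i) := by
    have h₁ := sum_range_add u N h
    have h₂ := sum_range_add u h N
    simp only [sum_sub_distrib, add_comm _ h]
    rw [sub_eq_sub_iff_add_eq_add, add_comm, ← h₂, add_comm h N, h₁, add_comm]
  calc ‖∑ n ∈ range N, (u (n + h) - u n)‖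
    _ ≤ ∑ i ∈ range h, 2 * C := by
      rw [hsum]
      refine norm_sum_le_of_le _ fun i _ ↦ (norm_sub_le _ _).trans ?_
      linarith [hu (N + i), hu i]
    _ = h * (2 * C) := by simp

lemma shift {C : ℝ} (hu : HasZeroMean u) (hC : ∀ n, ‖u n‖ ≤ C) (h : ℕ) :
    HasZeroMean fun n ↦ u (n + h) := by
  simpa only [sub_add_cancel] using (shift_sub hC h).add hu

end NormedAddCommGroup

end HasZeroMean

section VanDerCorput

variable {E : Type*} [NormedAddCommGroup E] [InnerProductSpace ℝ E]

open scoped Classical in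
lemma norm_sum_sq_eq_sum_norm_sq_add_sum_offDiag {ι : Type*} (s : Finset ι)
    (v : ι → E) :
    ‖∑ i ∈ s, v i‖ ^ 2 = ∑ i ∈ s, ‖v i‖ ^ 2 + ∑ p ∈ s.offDiag, ⟪v p.1, v p.2⟫ := by
  simp_rw [← real_inner_self_eq_norm_sq, sum_inner, inner_sum]
  rw [← sum_product', ← diag_union_offDiag, sum_union (disjoint_diag_offDiag s), sum_diag]

variable {u : ℕ → E} {C : ℝ}

lemma HasZeroMean.inner_shift_shift (hC : ∀ n, ‖u n‖ ≤ C)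
    (hu : ∀ h > 0, HasZeroMean fun n ↦ ⟪u n, u (n + h)⟫) {h h' : ℕ} (hne : h ≠ h') :
    HasZeroMean fun n ↦ ⟪u (n + h), u (n + h')⟫ := by
  wlog hlt : h < h' generalizing h h'
  · simpa only [real_inner_comm] using this hne.symm (hne.symm.lt_of_le (not_lt.1 hlt))
  obtain ⟨d, rfl⟩ := Nat.exists_eq_add_of_lt hlt
  have hbound (n : ℕ) : ‖⟪u n, u (n + (d + 1))⟫‖ ≤ C * C :=
    (norm_inner_le_norm _ _).trans <|
      mul_le_mul (hC _) (hC _) (norm_nonneg _) ((norm_nonneg _).trans (hC 0))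
  simpa only [add_assoc] using (hu (d + 1) d.succ_pos).shift hbound h

lemma eventually_sum_norm_sq_window_le (hC : ∀ n, ‖u n‖ ≤ C)
    (hu : ∀ h > 0, HasZeroMean fun n ↦ ⟪u n, u (n + h)⟫) {H : ℕ} (hH : 0 < H) :
    ∀ᶠ N : ℕ in atTop,
      ∑ n ∈ range N, ‖∑ h ∈ range H, u (n + h)‖ ^ 2 ≤ (C ^ 2 + 1) * H * N := by
  have hoff : HasZeroMean fun n ↦ ∑ p ∈ (range H).offDiag, ⟪u (n + p.1), u (n + p.2)⟫ :=
    .finsetSum fun p hp ↦ .inner_shift_shift hC hu (mem_offDiag.1 hp).2.2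
  filter_upwards [hoff.bound (Nat.cast_pos.2 hH : (0 : ℝ) < H)] with N hN
  have hdiag : ∑ n ∈ range N, ∑ h ∈ range H, ‖u (n + h)‖ ^ 2 ≤ N * (H * C ^ 2) := by
    calc _ ≤ ∑ n ∈ range N, ∑ h ∈ range H, C ^ 2 := by gcongr; exact hC _
      _ = N * (H * C ^ 2) := by simp
  have hoffN := (le_abs_self _).trans hN
  simp_rw [norm_sum_sq_eq_sum_norm_sq_add_sum_offDiag, sum_add_distrib]
  rw [Real.norm_natCast] at hoffN
  linarith

lemma eventually_norm_sum_window_le (hC : ∀ n, ‖u n‖ ≤ C)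
    (hu : ∀ h > 0, HasZeroMean fun n ↦ ⟪u n, u (n + h)⟫) {H : ℕ} (hH : 0 < H) :
    ∀ᶠ N : ℕ in atTop,
      ‖∑ n ∈ range N, ∑ h ∈ range H, u (n + h)‖ ≤ H * √((C ^ 2 + 1) / H) * N := by
  filter_upwards [eventually_sum_norm_sq_window_le hC hu hH] with N hN
  refine le_of_sq_le_sq ?_ (by positivity)
  calc ‖∑ n ∈ range N, ∑ h ∈ range H, u (n + h)‖ ^ 2
    _ ≤ (∑ n ∈ range N, ‖∑ h ∈ range H, u (n + h)‖) ^ 2 := by gcongr; exact norm_sum_le _ _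
    _ ≤ N * ∑ n ∈ range N, ‖∑ h ∈ range H, u (n + h)‖ ^ 2 := by
      simpa using sq_sum_le_card_mul_sum_sq (s := range N) (f := fun n ↦ ‖∑ h ∈ range H, u (n + h)‖)
    _ ≤ N * ((C ^ 2 + 1) * H * N) := by gcongr
    _ = (H * √((C ^ 2 + 1) / H) * N) ^ 2 := by
      rw [mul_pow, mul_pow, Real.sq_sqrt (by positivity)]
      field_simp

lemma eventually_norm_sum_le_of_forall_inner_shift (hC : ∀ n, ‖u n‖ ≤ C)
    (hu : ∀ h > 0, HasZeroMean fun n ↦ ⟪u n, u (n + h)⟫) {H : ℕ} (hH : 0 < H) :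
    ∀ᶠ N : ℕ in atTop, ‖∑ n ∈ range N, u n‖ ≤ (√((C ^ 2 + 1) / H) + 1 / H) * N := by
  have hdiff : HasZeroMean fun n ↦ ∑ h ∈ range H, (u (n + h) - u n) :=
    .finsetSum fun h _ ↦ .shift_sub hC h
  filter_upwards [hdiff.bound one_pos, eventually_norm_sum_window_le hC hu hH] with N hN hW
  have hsplit : (H : ℝ) • ∑ n ∈ range N, u n = ∑ n ∈ range N, ∑ h ∈ range H, u (n + h) -
      ∑ n ∈ range N, ∑ h ∈ range H, (u (n + h) - u n) := by
    simp [sum_sub_distrib, smul_sum, Nat.cast_smul_eq_nsmul]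
  have hH' : (0 : ℝ) < H := Nat.cast_pos.2 hH
  refine le_of_mul_le_mul_left ?_ hH'
  calc H * ‖∑ n ∈ range N, u n‖ = ‖(H : ℝ) • ∑ n ∈ range N, u n‖ := by simp [norm_smul]
    _ ≤ H * √((C ^ 2 + 1) / H) * N + 1 * ‖(N : ℝ)‖ := by
      rw [hsplit]
      exact (norm_sub_le _ _).trans (add_le_add hW hN)
    _ = H * ((√((C ^ 2 + 1) / H) + 1 / H) * N) := by
      rw [Real.norm_natCast]
      field_simp

theorem hasZeroMean_of_forall_inner_shift (hC : ∀ n, ‖u n‖ ≤ C)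
    (hu : ∀ h > 0, HasZeroMean fun n ↦ ⟪u n, u (n + h)⟫) : HasZeroMean u := by
  have hlim : Tendsto (fun H : ℕ ↦ √((C ^ 2 + 1) / H) + 1 / H) atTop (𝓝 0) := by
    simpa using (tendsto_const_div_atTop_nhds_zero_nat (C ^ 2 + 1)).sqrt.add
      (tendsto_const_div_atTop_nhds_zero_nat 1)
  refine IsLittleO.of_bound fun ε hε ↦ ?_
  obtain ⟨H, hHε, hH⟩ := ((hlim.eventually_le_const hε).and (eventually_gt_atTop 0)).exists
  filter_upwards [eventually_norm_sum_le_of_forall_inner_shift hC hu hH] with N hN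
  rw [Real.norm_natCast]
  exact hN.trans (by gcongr)

end VanDerCorput

section Weights

lemma eventually_forall_le_norm_le_of_isLittleO {E : Type*} [NormedAddCommGroup E] {f : ℕ → E}
    {g : ℕ → ℝ} (hfg : f =o[atTop] g) (hmono : Monotone g) (hg : Tendsto g atTop atTop)
    {ε : ℝ} (hε : 0 < ε) : ∀ᶠ N in atTop, ∀ m ≤ N, ‖f m‖ ≤ ε * g N := by
  obtain ⟨M, hM⟩ := eventually_atTop.1 ((hfg.bound hε).and (hg.eventually_ge_atTop 0))
  have hinit : ∀ᶠ N in atTop, ∀ m ∈ range M, ‖f m‖ ≤ ε * g N :=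
    (eventually_all_finset _).2 fun m _ ↦ (hg.const_mul_atTop hε).eventually_ge_atTop _
  filter_upwards [hinit] with N hN m hmN
  rcases lt_or_ge m M with hm | hm
  · exact hN m (mem_range.2 hm)
  · obtain ⟨hfm, hgm⟩ := hM m hm
    rw [Real.norm_of_nonneg hgm] at hfm
    exact hfm.trans (by gcongr; exact hmono hmN)

variable {E : Type*} [NormedAddCommGroup E] [NormedSpace ℝ E] {w : ℕ → ℝ} {u : ℕ → E}

lemma sum_weight_succ_smul_eq_sub (w : ℕ → ℝ) (u : ℕ → E) (N : ℕ) :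
    ∑ n ∈ range N, w (n + 1) • u n =
      w N • ∑ n ∈ range N, u n -
        ∑ m ∈ range N, (w (m + 1) - w m) • ∑ n ∈ range m, u n := by
  induction N with
  | zero => simp
  | succ N ih =>
    simp only [sum_range_succ, ih]
    module

lemma norm_sum_weight_succ_smul_le (hw : Monotone w) (hw₀ : 0 ≤ w 0) {N : ℕ} {M : ℝ}
    (hM : ∀ m ≤ N, ‖∑ n ∈ range m, u n‖ ≤ M) :
    ‖∑ n ∈ range N, w (n + 1) • u n‖ ≤ 2 * M * w N := by
  have hM₀ : 0 ≤ M := (norm_nonneg _).trans (hM 0 N.zero_le)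
  have hwN : 0 ≤ w N := hw₀.trans (hw N.zero_le)
  have hfirst : ‖w N • ∑ n ∈ range N, u n‖ ≤ w N * M := by
    rw [norm_smul, Real.norm_of_nonneg hwN]
    gcongr
    exact hM N le_rfl
  have hsecond : ‖∑ m ∈ range N, (w (m + 1) - w m) • ∑ n ∈ range m, u n‖ ≤ (w N - w 0) * M := by
    rw [← sum_range_sub, sum_mul]
    refine norm_sum_le_of_le _ fun m hm ↦ ?_
    have hdiff : 0 ≤ w (m + 1) - w m := sub_nonneg.2 (hw m.le_succ)
    rw [norm_smul, Real.norm_of_nonneg hdiff]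
    gcongr
    exact hM m (mem_range.1 hm).le
  rw [sum_weight_succ_smul_eq_sub]
  refine (norm_sub_le _ _).trans ?_
  linarith [mul_nonneg hw₀ hM₀]

theorem HasZeroMean.sum_weight_smul_isLittleO (hu : HasZeroMean u) (hw : Monotone w)
    (hw₀ : 0 ≤ w 0) :
    (fun N : ℕ ↦ ∑ n ∈ range N, w (n + 1) • u n) =o[atTop] fun N : ℕ ↦ w N * N := by
  refine IsLittleO.of_bound fun ε hε ↦ ?_
  filter_upwards [eventually_forall_le_norm_le_of_isLittleO hu Nat.mono_cast
    tendsto_natCast_atTop_atTop (half_pos hε)] with N hN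
  have hwN : 0 ≤ w N := hw₀.trans (hw N.zero_le)
  rw [Real.norm_of_nonneg (by positivity)]
  linarith [norm_sum_weight_succ_smul_le hw hw₀ hN]

end Weights

section Chirp

lemma sin_half_ne_zero {x : ℝ} (hx : ∀ m : ℤ, x ≠ 2 * Real.pi * m) : Real.sin (x / 2) ≠ 0 := by
  rw [Real.sin_ne_zero_iff]
  intro m hm
  exact hx m (by linarith)

lemma two_mul_sin_half_mul_sum_cos (x c : ℝ) (N : ℕ) :
    2 * Real.sin (x / 2) * ∑ n ∈ range N, Real.cos (x * n + c) =
      Real.sin (x * N + c - x / 2) - Real.sin (c - x / 2) := by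
  have htelescope := sum_range_sub (fun n : ℕ ↦ Real.sin (x * n + c - x / 2)) N
  rw [Nat.cast_zero, mul_zero, zero_add] at htelescope
  rw [← htelescope, mul_sum]
  refine sum_congr rfl fun n _ ↦ ?_
  rw [Real.sin_sub_sin]
  push_cast
  ring_nf

lemma hasZeroMean_cos_linear {x : ℝ} (hx : ∀ m : ℤ, x ≠ 2 * Real.pi * m) (c : ℝ) :
    HasZeroMean fun n : ℕ ↦ Real.cos (x * n + c) := by
  refine .of_norm_sum_le (C := 2 / ‖2 * Real.sin (x / 2)‖) fun N ↦ ?_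
  rw [le_div_iff₀' (norm_pos_iff.2 (mul_ne_zero two_ne_zero (sin_half_ne_zero hx))), ← norm_mul,
    two_mul_sin_half_mul_sum_cos]
  calc ‖Real.sin (x * N + c - x / 2) - Real.sin (c - x / 2)‖
    _ ≤ 1 + 1 :=
      (norm_sub_le _ _).trans (add_le_add (Real.abs_sin_le_one _) (Real.abs_sin_le_one _))
    _ = 2 := one_add_one_eq_two

lemma inner_exp_mul_I (a b : ℝ) :
    ⟪Complex.exp (a * Complex.I), Complex.exp (b * Complex.I)⟫ = Real.cos (b - a) := by
  rw [Complex.inner, ← Complex.exp_conj, ← Complex.exp_add, ← Complex.exp_ofReal_mul_I_re, map_mul,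
    Complex.conj_ofReal, Complex.conj_I, Complex.ofReal_sub, sub_mul, mul_neg, sub_eq_add_neg]

theorem hasZeroMean_cos_of_forall_cos_shift_sub {θ : ℕ → ℝ}
    (hθ : ∀ h > 0, HasZeroMean fun n ↦ Real.cos (θ (n + h) - θ n)) :
    HasZeroMean fun n ↦ Real.cos (θ n) := by
  have hexp : HasZeroMean fun n ↦ Complex.exp (θ n * Complex.I) :=
    hasZeroMean_of_forall_inner_shift (C := 1)
      (fun n ↦ (Complex.norm_exp_ofReal_mul_I _).le)
      (by simpa only [inner_exp_mul_I] using hθ)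
  simpa only [Complex.reCLM_apply, Complex.exp_ofReal_mul_I_re] using hexp.map Complex.reCLM

lemma hasZeroMean_cos_quadratic {β : ℝ} (hβ : Irrational (β / Real.pi)) (α c : ℝ) :
    HasZeroMean fun n : ℕ ↦ Real.cos (α * n + β * n ^ 2 + c) := by
  refine hasZeroMean_cos_of_forall_cos_shift_sub fun h hh ↦ ?_
  have hslope (m : ℤ) : 2 * β * h ≠ 2 * Real.pi * m := fun hm ↦
    (hβ.mul_natCast hh.ne').ne_int m <| by
      field_simp
      linarith
  convert hasZeroMean_cos_linear hslope (α * h + β * h ^ 2) using 3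
  push_cast
  ring

lemma hasZeroMean_cos_mul_cos_chirp {β α₁ α₂ : ℝ} (hβ : Irrational (β / Real.pi))
    (hα : ∀ m : ℤ, α₁ - α₂ ≠ 2 * Real.pi * m) (c₁ c₂ : ℝ) :
    HasZeroMean fun n : ℕ ↦
      Real.cos (α₁ * n + β * n ^ 2 + c₁) * Real.cos (α₂ * n + β * n ^ 2 + c₂) := by
  have hβ₂ : Irrational (2 * β / Real.pi) := by
    simpa only [mul_div_assoc, Nat.cast_ofNat] using hβ.natCast_mul two_ne_zero
  have hsum := (hasZeroMean_cos_linear hα (c₁ - c₂)).add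
    (hasZeroMean_cos_quadratic hβ₂ (α₁ + α₂) (c₁ + c₂))
  convert hsum.map (ContinuousLinearMap.mul ℝ ℝ (1 / 2)) using 2 with n
  have hproduct := Real.two_mul_cos_mul_cos (α₁ * n + β * n ^ 2 + c₁) (α₂ * n + β * n ^ 2 + c₂)
  rw [ContinuousLinearMap.mul_apply']
  ring_nf at hproduct ⊢
  linarith

end Chirp

theorem statement_6_general {β α₁ α₂ : ℝ} (hβ : Irrational (β / Real.pi))
    (hα : ∀ m : ℤ, α₁ - α₂ ≠ 2 * Real.pi * m) (c₁ c₂ : ℝ) {w : ℕ → ℝ} (hw : Monotone w)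
    (hw₀ : 0 ≤ w 0) :
    (fun N : ℕ ↦ ∑ n ∈ Icc 1 N,
        w n * Real.cos (α₁ * n + β * n ^ 2 + c₁) * Real.cos (α₂ * n + β * n ^ 2 + c₂))
      =o[atTop] fun N : ℕ ↦ w N * N := by
  have hα' (m : ℤ) : (α₁ + 2 * β) - (α₂ + 2 * β) ≠ 2 * Real.pi * m := by
    simpa only [add_sub_add_right_eq_sub] using hα m
  have hshift := hasZeroMean_cos_mul_cos_chirp hβ hα' (α₁ + β + c₁) (α₂ + β + c₂)
  refine (hshift.sum_weight_smul_isLittleO hw hw₀).congr_left fun N ↦ ?_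
  rw [← Ico_add_one_right_eq_Icc, sum_Ico_eq_sum_range, Nat.add_sub_cancel]
  refine sum_congr rfl fun n _ ↦ ?_
  rw [smul_eq_mul, mul_assoc, add_comm 1 n]
  push_cast
  ring_nf

/-- Cross-term chirp limit: components with the same chirp rate but distinct frequencies have
asymptotically vanishing normalized interaction. -/
theorem statement_6 (β : ℝ) (hβ : Irrational (β / Real.pi)) (α₁ α₂ : ℝ)
    (hα : ∀ m : ℤ, α₁ - α₂ ≠ 2 * Real.pi * m) (k : ℕ) :
    Tendsto (fun N : ℕ =>
        (1 / (N : ℝ) ^ (k + 1)) *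
          ∑ n ∈ Finset.Icc 1 N,
            (n : ℝ) ^ k * Real.cos (α₁ * n + β * n ^ 2) * Real.cos (α₂ * n + β * n ^ 2))
      atTop (nhds 0) := by
  have hmono : Monotone fun n : ℕ ↦ (n : ℝ) ^ k := fun m n hmn ↦
    pow_le_pow_left₀ m.cast_nonneg (Nat.cast_le.2 hmn) k
  simpa only [add_zero, pow_succ, one_div_mul_eq_div] using
    (statement_6_general hβ hα 0 0 hmono (by positivity)).tendsto_div_nhds_zero
end
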